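/- Let 0 < α < n, 1/q = 1 − α/n, and w ∈ A_{1,q}. Suppose ψ₁ and ψ₂ are positive functions on ℝⁿ × (0,∞) for which there is a constant C > 0, independent of a and r, with ∫_r^∞ (w(B(a,t)) / w^q(B(a,t))^{1/q})·ψ₁(a,t) dt/t ≤ C·ψ₂(a,r) for every (a,r) ∈ ℝⁿ × (0,∞). Then I_α is bounded from M^{1,w}_{ψ₁} to WM^{q,w^q}_{ψ₂}: there is C' > 0 such that ‖I_α f‖_{WM^{q,w^q}_{ψ₂}} ≤ C'·‖f‖_{M^{1,w}_{ψ₁}} for every f ∈ M^{1,w}_{ψ₁}. -/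

import Mathlib

open MeasureTheory Metric Set
open scoped ENNReal

noncomputable section

/-- The weighted measure of a set: `w(E) = ∫_E w(x) dx`, valued in `ℝ≥0∞`. -/
def wSet {n : ℕ} (w : EuclideanSpace ℝ (Fin n) → ℝ)
    (E : Set (EuclideanSpace ℝ (Fin n))) : ℝ≥0∞ :=
  ∫⁻ x in E, ENNReal.ofReal (w x)

/-- The weighted Lebesgue norm `‖f‖_{L^{p,w}(Ω)} = (∫_Ω |f(x)|^p w(x) dx)^{1/p}`. -/
def wLp {n : ℕ} (p : ℝ) (w f : EuclideanSpace ℝ (Fin n) → ℝ)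
    (Ω : Set (EuclideanSpace ℝ (Fin n))) : ℝ≥0∞ :=
  (∫⁻ x in Ω, ENNReal.ofReal |f x| ^ p * ENNReal.ofReal (w x)) ^ (1 / p)

/-- The weighted Lebesgue norm for an `ℝ≥0∞`-valued function. -/
def wLpE {n : ℕ} (p : ℝ) (w : EuclideanSpace ℝ (Fin n) → ℝ)
    (g : EuclideanSpace ℝ (Fin n) → ℝ≥0∞) (Ω : Set (EuclideanSpace ℝ (Fin n))) : ℝ≥0∞ :=
  (∫⁻ x in Ω, g x ^ p * ENNReal.ofReal (w x)) ^ (1 / p)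

/-- The weak weighted Lebesgue norm `‖f‖_{WL^{p,w}(Ω)} = sup_{γ>0} γ·w({x ∈ Ω : |f(x)| > γ})^{1/p}`. -/
def wWeakLp {n : ℕ} (p : ℝ) (w f : EuclideanSpace ℝ (Fin n) → ℝ)
    (Ω : Set (EuclideanSpace ℝ (Fin n))) : ℝ≥0∞ :=
  ⨆ γ : Set.Ioi (0 : ℝ),
    ENNReal.ofReal γ.1 * (wSet w {x | x ∈ Ω ∧ γ.1 < |f x|}) ^ (1 / p)

/-- The weak weighted Lebesgue norm for an `ℝ≥0∞`-valued function. -/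
def wWeakLpE {n : ℕ} (p : ℝ) (w : EuclideanSpace ℝ (Fin n) → ℝ)
    (g : EuclideanSpace ℝ (Fin n) → ℝ≥0∞) (Ω : Set (EuclideanSpace ℝ (Fin n))) : ℝ≥0∞ :=
  ⨆ γ : Set.Ioi (0 : ℝ),
    ENNReal.ofReal γ.1 * (wSet w {x | x ∈ Ω ∧ ENNReal.ofReal γ.1 < g x}) ^ (1 / p)

/-- `f ∈ L^{p,w}_loc`: `f` is measurable and `‖f‖_{L^{p,w}(B)} < ∞` on every ball. -/
def MemLocWLp {n : ℕ} (p : ℝ) (w f : EuclideanSpace ℝ (Fin n) → ℝ) : Prop :=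
  Measurable f ∧ ∀ (a : EuclideanSpace ℝ (Fin n)) (r : ℝ), 0 < r → wLp p w f (ball a r) < ⊤

/-- A weight: nonnegative, measurable, locally integrable, positive a.e. -/
def IsWeight {n : ℕ} (w : EuclideanSpace ℝ (Fin n) → ℝ) : Prop :=
  Measurable w ∧ (∀ x, 0 ≤ w x) ∧ LocallyIntegrable w volume ∧ ∀ᵐ x ∂volume, 0 < w x

/-- The Muckenhoupt class `A_p` for `1 < p`. -/
def MuckAp {n : ℕ} (p : ℝ) (w : EuclideanSpace ℝ (Fin n) → ℝ) : Prop :=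
  ∃ C : ℝ, 0 < C ∧ ∀ (a : EuclideanSpace ℝ (Fin n)) (r : ℝ), 0 < r →
    ((volume (ball a r))⁻¹ * ∫⁻ x in ball a r, ENNReal.ofReal (w x)) *
      ((volume (ball a r))⁻¹ *
        ∫⁻ x in ball a r, ENNReal.ofReal (w x ^ (-(1 / (p - 1))))) ^ (p - 1) ≤
      ENNReal.ofReal C

/-- The Muckenhoupt class `A_1`. -/
def MuckA1 {n : ℕ} (w : EuclideanSpace ℝ (Fin n) → ℝ) : Prop :=
  ∃ C : ℝ, 0 < C ∧ ∀ (a : EuclideanSpace ℝ (Fin n)) (r : ℝ), 0 < r →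
    ((volume (ball a r))⁻¹ * ∫⁻ x in ball a r, ENNReal.ofReal (w x)) *
      essSup (fun x => ENNReal.ofReal (w x)⁻¹) (volume.restrict (ball a r)) ≤
      ENNReal.ofReal C

/-- The class `A_{p,q}` for `1 < p`, where `p'` is the conjugate exponent of `p`. -/
def MuckApq {n : ℕ} (p q p' : ℝ) (w : EuclideanSpace ℝ (Fin n) → ℝ) : Prop :=
  ∃ C : ℝ, 0 < C ∧ ∀ (a : EuclideanSpace ℝ (Fin n)) (r : ℝ), 0 < r →
    ((volume (ball a r))⁻¹ * ∫⁻ x in ball a r, ENNReal.ofReal (w x ^ q)) ^ (1 / q) *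
      ((volume (ball a r))⁻¹ * ∫⁻ x in ball a r, ENNReal.ofReal (w x ^ (-p'))) ^ (1 / p') ≤
      ENNReal.ofReal C

/-- The class `A_{1,q}`. -/
def MuckA1q {n : ℕ} (q : ℝ) (w : EuclideanSpace ℝ (Fin n) → ℝ) : Prop :=
  ∃ C : ℝ, 0 < C ∧ ∀ (a : EuclideanSpace ℝ (Fin n)) (r : ℝ), 0 < r →
    ((volume (ball a r))⁻¹ * ∫⁻ x in ball a r, ENNReal.ofReal (w x ^ q)) ^ (1 / q) *
      essSup (fun x => ENNReal.ofReal (w x)⁻¹) (volume.restrict (ball a r)) ≤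
      ENNReal.ofReal C

/-- The Hardy–Littlewood maximal operator. -/
def HLMax {n : ℕ} (f : EuclideanSpace ℝ (Fin n) → ℝ)
    (x : EuclideanSpace ℝ (Fin n)) : ℝ≥0∞ :=
  ⨆ r : Set.Ioi (0 : ℝ), (volume (ball x r.1))⁻¹ * ∫⁻ y in ball x r.1, ENNReal.ofReal |f y|

/-- The fractional integral operator `I_α` (applied to `|f|`, valued in `ℝ≥0∞`). -/
def fracIntE {n : ℕ} (α : ℝ) (f : EuclideanSpace ℝ (Fin n) → ℝ)
    (x : EuclideanSpace ℝ (Fin n)) : ℝ≥0∞ :=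
  ∫⁻ y, ENNReal.ofReal |f y| / ENNReal.ofReal (dist x y ^ ((n : ℝ) - α))

/-- The fractional maximal operator `M_α`. -/
def fracMax {n : ℕ} (α : ℝ) (f : EuclideanSpace ℝ (Fin n) → ℝ)
    (x : EuclideanSpace ℝ (Fin n)) : ℝ≥0∞ :=
  ⨆ r : Set.Ioi (0 : ℝ),
    (volume (ball x r.1)) ^ (α / (n : ℝ) - 1) * ∫⁻ y in ball x r.1, ENNReal.ofReal |f y|

/-- The generalized weighted Morrey norm `‖f‖_{M^{p,w}_ψ}`. -/
def morreyNorm {n : ℕ} (p : ℝ) (w : EuclideanSpace ℝ (Fin n) → ℝ)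
    (ψ : EuclideanSpace ℝ (Fin n) → ℝ → ℝ) (f : EuclideanSpace ℝ (Fin n) → ℝ) : ℝ≥0∞ :=
  ⨆ (a : EuclideanSpace ℝ (Fin n)) (r : Set.Ioi (0 : ℝ)),
    (ENNReal.ofReal (ψ a r.1))⁻¹ * wSet w (ball a r.1) ^ (-(1 / p)) * wLp p w f (ball a r.1)

/-- The generalized weighted Morrey norm for an `ℝ≥0∞`-valued function. -/
def morreyNormE {n : ℕ} (p : ℝ) (w : EuclideanSpace ℝ (Fin n) → ℝ)
    (ψ : EuclideanSpace ℝ (Fin n) → ℝ → ℝ) (g : EuclideanSpace ℝ (Fin n) → ℝ≥0∞) : ℝ≥0∞ :=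
  ⨆ (a : EuclideanSpace ℝ (Fin n)) (r : Set.Ioi (0 : ℝ)),
    (ENNReal.ofReal (ψ a r.1))⁻¹ * wSet w (ball a r.1) ^ (-(1 / p)) * wLpE p w g (ball a r.1)

/-- The generalized weighted weak Morrey norm `‖f‖_{WM^{p,w}_ψ}`. -/
def morreyWeakNorm {n : ℕ} (p : ℝ) (w : EuclideanSpace ℝ (Fin n) → ℝ)
    (ψ : EuclideanSpace ℝ (Fin n) → ℝ → ℝ) (f : EuclideanSpace ℝ (Fin n) → ℝ) : ℝ≥0∞ :=
  ⨆ (a : EuclideanSpace ℝ (Fin n)) (r : Set.Ioi (0 : ℝ)),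
    (ENNReal.ofReal (ψ a r.1))⁻¹ * wSet w (ball a r.1) ^ (-(1 / p)) * wWeakLp p w f (ball a r.1)

/-- The generalized weighted weak Morrey norm for an `ℝ≥0∞`-valued function. -/
def morreyWeakNormE {n : ℕ} (p : ℝ) (w : EuclideanSpace ℝ (Fin n) → ℝ)
    (ψ : EuclideanSpace ℝ (Fin n) → ℝ → ℝ) (g : EuclideanSpace ℝ (Fin n) → ℝ≥0∞) : ℝ≥0∞ :=
  ⨆ (a : EuclideanSpace ℝ (Fin n)) (r : Set.Ioi (0 : ℝ)),
    (ENNReal.ofReal (ψ a r.1))⁻¹ * wSet w (ball a r.1) ^ (-(1 / p)) * wWeakLpE p w g (ball a r.1)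

end

/-!
For `y` outside a null set, the condition `A_{1,q}` bounds the `w ^ q`-measure of every ball centred
at `y` in such a way that the kernel `x ↦ |x - y| ^ (α - n)` has weak `L ^ q` quasinorm at most a
constant times `w y`. As `q > 1`, Minkowski's inequality holds in weak `L ^ q`, and integrating the
kernels against `|f y| dy` gives the weak-type bound `L ^ {1,w} → WL ^ {q,w ^ q}`.

On a ball `B(a,r)` this controls the contribution of `f` on `B(a,2r)`. The contribution of the rest
of `f` is, by Fubini's theorem and `A_{1,q}` again, at most a constant multiple of
`T = ∫_r^∞ ‖f‖_{L^{1,w}(B(a,t))} w^q(B(a,t))^{-1/q} dt/t`. Since `w ^ q` is doubling, the part of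
`T` with `2r < t ≤ 4r` alone dominates the near contribution. Thus
`‖I_α f‖_{WL^{q,w^q}(B(a,r))} ≲ w^q(B(a,r))^{1/q} T`, which the hypothesis on `ψ₁` and `ψ₂` turns
into the bound between Morrey spaces.
-/

theorem lintegral_Ioi_ofReal_rpow {a c : ℝ} (ha : a < -1) (hc : 0 < c) :
    ∫⁻ t in Ioi c, ENNReal.ofReal (t ^ a) = ENNReal.ofReal (-c ^ (a + 1) / (a + 1)) := by
  rw [← ofReal_integral_eq_lintegral_ofReal (integrableOn_Ioi_rpow_of_lt ha hc),
    integral_Ioi_rpow_of_lt ha hc]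
  filter_upwards [ae_restrict_mem measurableSet_Ioi] with t ht
  exact Real.rpow_nonneg (hc.trans ht).le _

theorem rpow_inv_eq_lintegral_Ioi {β r : ℝ} (hβ : 0 < β) (hr : 0 < r) :
    (ENNReal.ofReal r ^ β)⁻¹ =
      ENNReal.ofReal β * ∫⁻ t in Ioi r, ENNReal.ofReal (t ^ (-β - 1)) := by
  rw [lintegral_Ioi_ofReal_rpow (by linarith) hr, ← ENNReal.ofReal_mul hβ.le,
    sub_add_cancel, neg_div_neg_eq, mul_div_cancel₀ _ hβ.ne', ← ENNReal.rpow_neg,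
    ENNReal.ofReal_rpow_of_pos hr]

section WeakLp

open scoped NNReal

/-- The weak Lebesgue quasinorm `sup_{s > 0} s · μ{f > s}^{1/q}` of a nonnegative function; the
value `s = 0` is allowed in the supremum because it contributes nothing. -/
noncomputable def weakLpNorm {X : Type*} [MeasurableSpace X] (q : ℝ) (μ : Measure X)
    (f : X → ℝ≥0∞) : ℝ≥0∞ :=
  ⨆ s : ℝ≥0, s * μ {x | s < f x} ^ (1 / q)

variable {X Y : Type*} [MeasurableSpace X] [MeasurableSpace Y] {μ ν : Measure X} {q : ℝ}
  {f g : X → ℝ≥0∞}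

theorem mul_measure_lt_rpow_le_weakLpNorm (s : ℝ≥0) :
    s * μ {x | s < f x} ^ (1 / q) ≤ weakLpNorm q μ f :=
  le_iSup (fun s : ℝ≥0 ↦ s * μ {x | s < f x} ^ (1 / q)) s

theorem weakLpNorm_mono_measure (hq : 0 ≤ q) (hμν : μ ≤ ν) :
    weakLpNorm q μ f ≤ weakLpNorm q ν f := by
  unfold weakLpNorm
  gcongr

theorem weakLpNorm_le_of_ae_le (hq : 0 < q) {c : ℝ≥0∞} (hf : ∀ᵐ x ∂μ, f x ≤ c) :
    weakLpNorm q μ f ≤ c * μ univ ^ (1 / q) := by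
  refine iSup_le fun s ↦ ?_
  rcases le_or_gt (s : ℝ≥0∞) c with hsc | hcs
  · gcongr
    exact subset_univ _
  · have hnull : μ {x | s < f x} = 0 := by
      refine measure_mono_null (fun x hx ↦ ?_) hf
      exact not_le.2 (hcs.trans hx)
    simp [hnull, hq]

theorem weakLpNorm_add_le (hq : 1 ≤ q) :
    weakLpNorm q μ (fun x ↦ f x + g x) ≤ 2 * (weakLpNorm q μ f + weakLpNorm q μ g) := by
  have hq₀ : 0 ≤ 1 / q := by positivity
  refine iSup_le fun s ↦ ?_
  have hsubset : {x | s < f x + g x} ⊆ {x | ↑(s / 2) < f x} ∪ {x | ↑(s / 2) < g x} := by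
    intro x hx
    by_contra hfg
    simp only [mem_union, mem_ofPred_eq, not_or, not_lt] at hfg
    refine hx.not_ge ((add_le_add hfg.1 hfg.2).trans_eq ?_)
    rw [← ENNReal.coe_add, add_halves]
  calc s * μ {x | s < f x + g x} ^ (1 / q)
      ≤ s * (μ {x | ↑(s / 2) < f x} ^ (1 / q) + μ {x | ↑(s / 2) < g x} ^ (1 / q)) := by
        gcongr
        refine (ENNReal.rpow_le_rpow ((measure_mono hsubset).trans (measure_union_le _ _))
          hq₀).trans (ENNReal.rpow_add_le_add_rpow _ _ hq₀ ?_)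
        exact div_le_one_of_le₀ hq (by positivity)
    _ = 2 * (↑(s / 2) * μ {x | ↑(s / 2) < f x} ^ (1 / q) +
          ↑(s / 2) * μ {x | ↑(s / 2) < g x} ^ (1 / q)) := by
        rw [← mul_add, ← mul_assoc, ← ENNReal.coe_ofNat, ← ENNReal.coe_mul,
          mul_div_cancel₀ s two_ne_zero]
    _ ≤ 2 * (weakLpNorm q μ f + weakLpNorm q μ g) := by
        gcongr <;> exact mul_measure_lt_rpow_le_weakLpNorm _

theorem measure_lt_le_weakLpNorm_div_rpow (hq : 0 < q) {s : ℝ≥0} (hs : s ≠ 0) :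
    μ {x | s < f x} ≤ (weakLpNorm q μ f / s) ^ q := by
  rw [← ENNReal.rpow_inv_le_iff hq, ← one_div,
    ENNReal.le_div_iff_mul_le (by simp [hs]) (by simp), mul_comm]
  exact mul_measure_lt_rpow_le_weakLpNorm s

theorem lintegral_eq_lintegral_measure_ofReal_lt [SFinite μ] (hf : Measurable f) :
    ∫⁻ x, f x ∂μ = ∫⁻ t in Ioi (0 : ℝ), μ {x | ENNReal.ofReal t < f x} := by
  have hregion : MeasurableSet {p : X × ℝ | ENNReal.ofReal p.2 < f p.1} :=
    measurableSet_lt (by fun_prop) (by fun_prop)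
  have hvolume (c : ℝ≥0∞) : c = ∫⁻ t in Ioi (0 : ℝ), {t | ENNReal.ofReal t < c}.indicator 1 t := by
    rw [lintegral_indicator_one (measurableSet_lt (by fun_prop) (by fun_prop)),
      Measure.restrict_apply' measurableSet_Ioi]
    rcases eq_or_ne c ⊤ with rfl | hc
    · simp
    · have hIoo : {t | ENNReal.ofReal t < c} ∩ Ioi 0 = Ioo 0 c.toReal := by
        ext t
        simp only [mem_inter_iff, mem_ofPred_eq, mem_Ioi, mem_Ioo, and_comm (b := 0 < t)]
        exact and_congr_right fun ht ↦ ENNReal.ofReal_lt_iff_lt_toReal ht.le hc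
      rw [hIoo, Real.volume_Ioo, sub_zero, ENNReal.ofReal_toReal hc]
  calc ∫⁻ x, f x ∂μ
      = ∫⁻ x, (∫⁻ t in Ioi (0 : ℝ), {t | ENNReal.ofReal t < f x}.indicator 1 t) ∂μ :=
        lintegral_congr fun x ↦ hvolume (f x)
    _ = ∫⁻ t in Ioi (0 : ℝ), ∫⁻ x, {x | ENNReal.ofReal t < f x}.indicator 1 x ∂μ :=
        lintegral_lintegral_swap (measurable_one.indicator hregion).aemeasurable
    _ = ∫⁻ t in Ioi (0 : ℝ), μ {x | ENNReal.ofReal t < f x} :=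
        lintegral_congr fun t ↦ lintegral_indicator_one (measurableSet_lt measurable_const hf)

theorem lintegral_Ioi_measure_lt_le (hq : 1 < q) {A S : ℝ} (hA : 0 < A) (hS : 0 < S)
    (hfA : weakLpNorm q μ f ≤ ENNReal.ofReal A) :
    ∫⁻ t in Ioi S, μ {x | ENNReal.ofReal t < f x} ≤
      ENNReal.ofReal (A ^ q * S ^ (1 - q) / (q - 1)) := by
  have hq₀ : 0 < q := by linarith
  calc ∫⁻ t in Ioi S, μ {x | ENNReal.ofReal t < f x}
      ≤ ∫⁻ t in Ioi S, ENNReal.ofReal (A ^ q) * ENNReal.ofReal (t ^ (-q)) := by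
        refine setLIntegral_mono' measurableSet_Ioi fun t ht ↦ ?_
        have ht₀ : 0 < t := hS.trans ht
        refine (measure_lt_le_weakLpNorm_div_rpow hq₀ (by simpa using ht₀)).trans ?_
        grw [hfA]
        rw [← ENNReal.ofReal, ← ENNReal.ofReal_div_of_pos ht₀,
          ENNReal.ofReal_rpow_of_nonneg (by positivity) hq₀.le, Real.div_rpow hA.le ht₀.le,
          div_eq_mul_inv, ← Real.rpow_neg ht₀.le, ENNReal.ofReal_mul (by positivity)]
    _ = ENNReal.ofReal (A ^ q * S ^ (1 - q) / (q - 1)) := by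
        rw [lintegral_const_mul' _ _ ENNReal.ofReal_ne_top,
          lintegral_Ioi_ofReal_rpow (by linarith) hS, ← ENNReal.ofReal_mul (by positivity),
          show -q + 1 = -(q - 1) by ring, neg_div_neg_eq, mul_div_assoc', neg_sub]

theorem lintegral_le_of_weakLpNorm_le [IsFiniteMeasure μ] (hq : 1 < q) (hf : Measurable f)
    {A m : ℝ} (hA : 0 < A) (hm : 0 < m) (hfA : weakLpNorm q μ f ≤ ENNReal.ofReal A)
    (hμ : μ univ = ENNReal.ofReal m) :
    ∫⁻ x, f x ∂μ ≤ ENNReal.ofReal (q / (q - 1) * A * m ^ (1 - 1 / q)) := by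
  have hq₁ : 0 < q - 1 := by linarith
  -- The height at which the bounds `m` and `(A / t) ^ q` for `μ {f > t}` coincide.
  set S : ℝ := A * m ^ (-(1 / q)) with hS
  have hS₀ : 0 < S := by positivity
  have hlow : ∫⁻ t in Ioc 0 S, μ {x | ENNReal.ofReal t < f x} ≤
      ENNReal.ofReal (A * m ^ (1 - 1 / q)) := by
    calc ∫⁻ t in Ioc 0 S, μ {x | ENNReal.ofReal t < f x}
        ≤ ∫⁻ _ in Ioc 0 S, ENNReal.ofReal m :=
          lintegral_mono fun t ↦ hμ ▸ measure_mono (subset_univ _)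
      _ = ENNReal.ofReal (A * m ^ (1 - 1 / q)) := by
          rw [setLIntegral_const, Real.volume_Ioc, sub_zero, ← ENNReal.ofReal_mul hm.le, hS,
            sub_eq_add_neg, Real.rpow_add hm, Real.rpow_one, mul_left_comm]
  have hhigh : ∫⁻ t in Ioi S, μ {x | ENNReal.ofReal t < f x} ≤
      ENNReal.ofReal (A * m ^ (1 - 1 / q) / (q - 1)) := by
    refine (lintegral_Ioi_measure_lt_le hq hA hS₀ hfA).trans_eq ?_
    have hm_exp : -(1 / q) * (1 - q) = 1 - 1 / q := by field_simp; ring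
    rw [hS, Real.mul_rpow hA.le (by positivity), ← Real.rpow_mul hm.le, hm_exp, ← mul_assoc,
      ← Real.rpow_add hA, add_sub_cancel, Real.rpow_one]
  rw [lintegral_eq_lintegral_measure_ofReal_lt hf, ← Ioc_union_Ioi_eq_Ioi hS₀.le]
  grw [lintegral_union_le, hlow, hhigh]
  rw [← ENNReal.ofReal_add (by positivity) (by positivity)]
  refine ENNReal.ofReal_le_ofReal (le_of_eq ?_)
  field_simp
  ring

theorem lintegral_le_weakLpNorm [IsFiniteMeasure μ] (hq : 1 < q) (hf : Measurable f) :
    ∫⁻ x, f x ∂μ ≤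
      ENNReal.ofReal (q / (q - 1)) * weakLpNorm q μ f * μ univ ^ (1 - 1 / q) := by
  have hq₀ : 0 < q := by linarith
  have hq₁ : 0 < q - 1 := by linarith
  rcases eq_or_ne (μ univ) 0 with hμ | hμ
  · simp [Measure.measure_univ_eq_zero.1 hμ]
  have hm₀ : 0 < (μ univ).toReal := ENNReal.toReal_pos hμ (measure_ne_top μ univ)
  have hm : μ univ = ENNReal.ofReal (μ univ).toReal :=
    (ENNReal.ofReal_toReal (measure_ne_top μ univ)).symm
  rcases eq_or_ne (weakLpNorm q μ f) 0 with hf₀ | hf₀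
  · rw [lintegral_eq_lintegral_measure_ofReal_lt hf]
    refine (setLIntegral_mono' (g := 0) measurableSet_Ioi fun t ht ↦ ?_).trans (by simp)
    grw [ENNReal.ofReal, measure_lt_le_weakLpNorm_div_rpow hq₀ (by simpa using ht)]
    simp [hf₀, hq₀]
  rcases eq_or_ne (weakLpNorm q μ f) ⊤ with hf_top | hf_top
  · have hc : ENNReal.ofReal (q / (q - 1)) ≠ 0 := by
      simpa using div_pos hq₀ hq₁
    simp [hf_top, ENNReal.mul_top hc, ENNReal.top_mul, hμ]
  · have := lintegral_le_of_weakLpNorm_le hq hf (ENNReal.toReal_pos hf₀ hf_top) hm₀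
      (ENNReal.ofReal_toReal hf_top).ge hm
    rwa [ENNReal.ofReal_mul (by positivity), ENNReal.ofReal_mul (by positivity),
      ENNReal.ofReal_toReal hf_top, ← ENNReal.ofReal_rpow_of_pos hm₀, ← hm] at this

theorem weakLpNorm_lintegral_le [IsFiniteMeasure μ] {κ : Measure Y} [SFinite κ] (hq : 1 < q)
    {k : X → Y → ℝ≥0∞} (hk : Measurable (Function.uncurry k)) :
    weakLpNorm q μ (fun x ↦ ∫⁻ y, k x y ∂κ) ≤
      ENNReal.ofReal (q / (q - 1)) * ∫⁻ y, weakLpNorm q μ (fun x ↦ k x y) ∂κ := by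
  have hq₀ : 0 < q := by linarith
  have hexp : 0 ≤ 1 - 1 / q := by rw [sub_nonneg, div_le_one hq₀]; exact hq.le
  refine iSup_le fun s ↦ ?_
  set E := {x | s < ∫⁻ y, k x y ∂κ}
  have hE : MeasurableSet E := measurableSet_lt measurable_const hk.lintegral_prod_right'
  rcases eq_or_ne (μ E) 0 with hE₀ | hE₀
  · simp [hE₀, hq₀]
  have htest : s * μ E ≤ ENNReal.ofReal (q / (q - 1)) *
      (∫⁻ y, weakLpNorm q μ (fun x ↦ k x y) ∂κ) * μ E ^ (1 - 1 / q) := by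
    calc s * μ E ≤ ∫⁻ x in E, ∫⁻ y, k x y ∂κ ∂μ := by
          rw [← setLIntegral_const]
          exact setLIntegral_mono' hE fun x hx ↦ hx.le
      _ = ∫⁻ y, ∫⁻ x in E, k x y ∂μ ∂κ := lintegral_lintegral_swap hk.aemeasurable
      _ ≤ ∫⁻ y, ENNReal.ofReal (q / (q - 1)) * μ E ^ (1 - 1 / q) *
            weakLpNorm q μ (fun x ↦ k x y) ∂κ := by
          refine lintegral_mono fun y ↦ ?_
          grw [lintegral_le_weakLpNorm hq (by fun_prop),
            weakLpNorm_mono_measure hq₀.le Measure.restrict_le_self, Measure.restrict_apply_univ,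
            mul_right_comm]
      _ = _ := by
          rw [lintegral_const_mul' _ _ (by finiteness), mul_right_comm]
  have hsplit : μ E = μ E ^ (1 / q) * μ E ^ (1 - 1 / q) := by
    rw [← ENNReal.rpow_add _ _ hE₀ (measure_ne_top μ E), add_sub_cancel, ENNReal.rpow_one]
  rwa [hsplit, ← mul_assoc, ← hsplit,
    ENNReal.mul_le_mul_iff_left (by positivity) (by finiteness)] at htest

end WeakLp

section RieszPotential

open scoped NNReal

/-- The Riesz potential of order `n - β` of a measure `κ`: integration of the kernel
`edist x y ^ (-β)`, which is infinite on the diagonal. -/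
noncomputable def rieszPotential {X : Type*} [PseudoEMetricSpace X] [MeasurableSpace X] (β : ℝ)
    (κ : Measure X) (x : X) : ℝ≥0∞ :=
  ∫⁻ y, (edist x y ^ β)⁻¹ ∂κ

/-- The condition `A_{1,q}` in the form used to estimate `rieszPotential β κ` in weak `L ^ q (ν)`.
The classical condition is the case where `ν` is `w ^ q dx`, `κ` is Lebesgue measure and
`β = n / q`: the power `t ^ β` stands for `|B(a,t)| ^ (1 / q)`, and the essential supremum of `w⁻¹`
is expressed by an almost everywhere inequality. -/
def FractionalA1 {X : Type*} [PseudoMetricSpace X] [MeasurableSpace X] (β q : ℝ) (K : ℝ≥0)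
    (ν κ : Measure X) (w : X → ℝ≥0∞) : Prop :=
  ∀ a t, 0 < t → ∀ᵐ y ∂κ, y ∈ ball a t → ν (ball a t) ^ (1 / q) ≤ K * ENNReal.ofReal t ^ β * w y

/-- The tail `∫_r^∞ κ_w(B(a,t)) ν(B(a,t))^{-1/q} dt/t`, where `κ_w` is the measure `w κ`. -/
noncomputable def tailIntegral {X : Type*} [PseudoMetricSpace X] [MeasurableSpace X] (q : ℝ)
    (κ ν : Measure X) (w : X → ℝ≥0∞) (a : X) (r : ℝ) : ℝ≥0∞ :=
  ∫⁻ t in Ioi r, (∫⁻ y in ball a t, w y ∂κ) * ν (ball a t) ^ (-(1 / q)) * ENNReal.ofReal t⁻¹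

variable {X : Type*} [PseudoMetricSpace X] {β q r R : ℝ} {a x y : X}

theorem edist_rpow_inv_le_of_mem_ball (hβ : 0 ≤ β) (hx : x ∈ ball a r) (hy : y ∉ ball a (2 * r)) :
    (edist x y ^ β)⁻¹ ≤ 2 ^ β * (edist y a ^ β)⁻¹ := by
  have hdist : edist y a ≤ 2 * edist x y := by
    rw [mem_ball] at hx hy
    rw [edist_dist, edist_dist, ← ENNReal.ofReal_ofNat 2, ← ENNReal.ofReal_mul zero_le_two]
    apply ENNReal.ofReal_le_ofReal
    linarith [dist_triangle_left y a x]
  have hpow : edist y a ^ β ≤ 2 ^ β * edist x y ^ β := by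
    rw [← ENNReal.mul_rpow_of_nonneg _ _ hβ]
    gcongr
  calc (edist x y ^ β)⁻¹ = 2 ^ β * (2 ^ β * edist x y ^ β)⁻¹ := by
        rw [ENNReal.mul_inv (by simp) (by simp), ← mul_assoc,
          ENNReal.mul_inv_cancel (by simp) (by finiteness), one_mul]
    _ ≤ 2 ^ β * (edist y a ^ β)⁻¹ := by gcongr

variable [MeasurableSpace X] {K L : ℝ≥0} {κ κ' ν ν' : Measure X} {w : X → ℝ≥0∞}

theorem weakLpNorm_edist_rpow_inv_le (hβ : 0 < β) {A : ℝ≥0∞}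
    (hν : ∀ t, 0 < t → ν (ball y t) ^ (1 / q) ≤ A * ENNReal.ofReal t ^ β) :
    weakLpNorm q ν (fun x ↦ (edist x y ^ β)⁻¹) ≤ A := by
  refine iSup_le fun s ↦ ?_
  rcases eq_or_ne s 0 with rfl | hs
  · simp
  set t : ℝ≥0 := s⁻¹ ^ β⁻¹ with ht
  have hst : (s : ℝ≥0∞) * (t : ℝ≥0∞) ^ β = 1 := by
    rw [← ENNReal.coe_rpow_of_nonneg _ hβ.le, ht, NNReal.rpow_inv_rpow hβ.ne', ← ENNReal.coe_mul,
      mul_inv_cancel₀ hs, ENNReal.coe_one]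
  have ht_inv : (t : ℝ≥0∞) ^ β = (s : ℝ≥0∞)⁻¹ :=
    ENNReal.eq_inv_of_mul_eq_one_left (by rwa [mul_comm])
  have hball : {x | (s : ℝ≥0∞) < (edist x y ^ β)⁻¹} = ball y t := by
    ext x
    rw [mem_ofPred_eq, ENNReal.lt_inv_iff_lt_inv, ← ht_inv, ENNReal.rpow_lt_rpow_iff hβ,
      ← Metric.eball_coe, mem_eball]
  have ht₀ : 0 < (t : ℝ) := by positivity
  calc s * ν {x | (s : ℝ≥0∞) < (edist x y ^ β)⁻¹} ^ (1 / q)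
      ≤ s * (A * ENNReal.ofReal t ^ β) := by
        rw [hball]
        gcongr
        exact hν t ht₀
    _ = A := by rw [ENNReal.ofReal_coe_nnreal, mul_left_comm, hst, mul_one]

theorem ae_forall_exists_ball [SecondCountableTopology X] {P : X → ℝ → X → Prop}
    (hP : ∀ a t, 0 < t → ∀ᵐ y ∂κ, y ∈ ball a t → P a t y) :
    ∀ᵐ y ∂κ, ∀ t, 0 < t → ∃ a s, 0 < s ∧ s ≤ 3 * t ∧ ball y t ⊆ ball a s ∧ P a s y := by
  obtain ⟨D, hD_count, hD_dense⟩ := TopologicalSpace.exists_countable_dense X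
  have hall : ∀ᵐ y ∂κ, ∀ a ∈ D, ∀ s : ℚ, 0 < (s : ℝ) → y ∈ ball a (s : ℝ) → P a s y := by
    rw [ae_ball_iff hD_count]
    simp only [ae_all_iff, Filter.eventually_imp_distrib_left]
    exact fun a _ s hs ↦ hP a s hs
  filter_upwards [hall] with y hy t ht
  obtain ⟨a, haD, hya⟩ := hD_dense.exists_dist_lt y ht
  obtain ⟨s, hts, hst⟩ := exists_rat_btwn (show 2 * t < 3 * t by linarith)
  have hs : 0 < (s : ℝ) := by linarith
  refine ⟨a, s, hs, hst.le, ball_subset_ball' (by linarith), hy a haD s hs ?_⟩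
  rw [mem_ball]
  linarith

theorem FractionalA1.mono (h : FractionalA1 β q K ν κ w) (hq : 0 ≤ q) (hν : ν' ≤ ν)
    (hκ : κ' ≪ κ) : FractionalA1 β q K ν' κ' w := by
  intro a t ht
  filter_upwards [hκ.ae_le (h a t ht)] with y hy hya
  exact (by gcongr : ν' (ball a t) ^ (1 / q) ≤ ν (ball a t) ^ (1 / q)).trans (hy hya)

theorem FractionalA1.ae_weakLpNorm_kernel_le [SecondCountableTopology X]
    (h : FractionalA1 β q K ν κ w) (hβ : 0 < β) (hq : 0 < q) :
    ∀ᵐ y ∂κ, weakLpNorm q ν (fun x ↦ (edist x y ^ β)⁻¹) ≤ 3 ^ β * K * w y := by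
  filter_upwards [ae_forall_exists_ball h] with y hy
  refine weakLpNorm_edist_rpow_inv_le hβ fun t ht ↦ ?_
  obtain ⟨a, s, -, hst, hsubset, hs⟩ := hy t ht
  calc ν (ball y t) ^ (1 / q) ≤ ν (ball a s) ^ (1 / q) := by gcongr
    _ ≤ K * ENNReal.ofReal s ^ β * w y := hs
    _ ≤ K * ENNReal.ofReal (3 * t) ^ β * w y := by gcongr
    _ = 3 ^ β * K * w y * ENNReal.ofReal t ^ β := by
        rw [ENNReal.ofReal_mul (by simp), ENNReal.mul_rpow_of_nonneg _ _ hβ.le]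
        simp only [ENNReal.ofReal_ofNat]
        ring

theorem FractionalA1.weakLpNorm_rieszPotential_le [SecondCountableTopology X] [BorelSpace X]
    [IsFiniteMeasure ν] [SFinite κ] (h : FractionalA1 β q K ν κ w) (hβ : 0 < β) (hq : 1 < q) :
    weakLpNorm q ν (rieszPotential β κ) ≤
      ENNReal.ofReal (q / (q - 1)) * (3 ^ β * K) * ∫⁻ y, w y ∂κ := by
  have hcoef : (3 : ℝ≥0∞) ^ β * K ≠ ⊤ := by finiteness
  calc weakLpNorm q ν (rieszPotential β κ)
      ≤ ENNReal.ofReal (q / (q - 1)) *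
          ∫⁻ y, weakLpNorm q ν (fun x ↦ (edist x y ^ β)⁻¹) ∂κ :=
        weakLpNorm_lintegral_le hq (by fun_prop)
    _ ≤ ENNReal.ofReal (q / (q - 1)) * ∫⁻ y, 3 ^ β * K * w y ∂κ := by
        refine mul_le_mul_right (lintegral_mono_ae ?_) _
        exact (h.ae_weakLpNorm_kernel_le hβ (by linarith))
    _ = ENNReal.ofReal (q / (q - 1)) * (3 ^ β * K) * ∫⁻ y, w y ∂κ := by
        rw [lintegral_const_mul' _ _ hcoef, mul_assoc, mul_assoc, mul_assoc]

theorem FractionalA1.measure_ball_mul_le [OpensMeasurableSpace X] (h : FractionalA1 β q K ν κ w)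
    {t : ℝ} (ht : 0 < t) :
    κ (ball a t) * ν (ball a t) ^ (1 / q) ≤
      K * ENNReal.ofReal t ^ β * ∫⁻ y in ball a t, w y ∂κ := by
  have hcoef : (K : ℝ≥0∞) * ENNReal.ofReal t ^ β ≠ ⊤ := by finiteness
  rw [← lintegral_const_mul' _ _ hcoef, mul_comm, ← setLIntegral_const]
  exact setLIntegral_mono_ae' measurableSet_ball (h a t ht)

theorem lintegral_compl_ball_edist_rpow_inv_le [SecondCountableTopology X] [OpensMeasurableSpace X]
    [SFinite κ] (hβ : 0 < β) (hR : 0 < R) :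
    ∫⁻ y in (ball a R)ᶜ, (edist y a ^ β)⁻¹ ∂κ ≤
      ENNReal.ofReal β * ∫⁻ t in Ioi R, ENNReal.ofReal (t ^ (-β - 1)) * κ (ball a t) := by
  have hregion : MeasurableSet {p : X × ℝ | dist p.1 a < p.2} :=
    measurableSet_lt (by fun_prop) (by fun_prop)
  set k : X → ℝ → ℝ≥0∞ := fun y t ↦
    {p : X × ℝ | dist p.1 a < p.2}.indicator (fun p ↦ ENNReal.ofReal (p.2 ^ (-β - 1))) (y, t)
  have hk : Measurable (Function.uncurry k) := Measurable.indicator (by fun_prop) hregion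
  have hk_left {y : X} (hy : R ≤ dist y a) :
      (edist y a ^ β)⁻¹ ≤ ENNReal.ofReal β * ∫⁻ t in Ioi R, k y t := by
    rw [edist_dist, rpow_inv_eq_lintegral_Ioi hβ (hR.trans_le hy)]
    refine mul_le_mul_right ?_ _
    refine (setLIntegral_mono' measurableSet_Ioi fun t ht ↦ ?_).trans
      (lintegral_mono_set (Ioi_subset_Ioi hy))
    simp [k, mem_Ioi.1 ht]
  have hk_right (t : ℝ) : ∫⁻ y, k y t ∂κ = ENNReal.ofReal (t ^ (-β - 1)) * κ (ball a t) := by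
    rw [← lintegral_indicator_const measurableSet_ball]
    rfl
  calc ∫⁻ y in (ball a R)ᶜ, (edist y a ^ β)⁻¹ ∂κ
      ≤ ∫⁻ y in (ball a R)ᶜ, ENNReal.ofReal β * (∫⁻ t in Ioi R, k y t) ∂κ :=
        setLIntegral_mono' measurableSet_ball.compl fun y hy ↦ hk_left (by simpa using hy)
    _ ≤ ENNReal.ofReal β * ∫⁻ y, (∫⁻ t in Ioi R, k y t) ∂κ := by
        rw [lintegral_const_mul' _ _ ENNReal.ofReal_ne_top]
        gcongr
        exact Measure.restrict_le_self
    _ = ENNReal.ofReal β * ∫⁻ t in Ioi R, ENNReal.ofReal (t ^ (-β - 1)) * κ (ball a t) := by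
        rw [lintegral_lintegral_swap hk.aemeasurable]
        simp only [hk_right]

theorem tailIntegral_anti (hrR : r ≤ R) : tailIntegral q κ ν w a R ≤ tailIntegral q κ ν w a r :=
  lintegral_mono_set (Ioi_subset_Ioi hrR)

theorem FractionalA1.lintegral_Ioi_le_tailIntegral [OpensMeasurableSpace X] [ProperSpace X]
    [IsFiniteMeasureOnCompacts ν] [ν.IsOpenPosMeasure] (h : FractionalA1 β q K ν κ w)
    (hR : 0 < R) :
    ∫⁻ t in Ioi R, ENNReal.ofReal (t ^ (-β - 1)) * κ (ball a t) ≤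
      K * tailIntegral q κ ν w a R := by
  rw [tailIntegral, ← lintegral_const_mul' _ _ ENNReal.coe_ne_top]
  refine setLIntegral_mono' measurableSet_Ioi fun t ht ↦ ?_
  have ht : 0 < t := hR.trans ht
  set F := ν (ball a t) ^ (1 / q) with hF
  have hF₀ : F ≠ 0 := by
    rw [hF]
    have := measure_ball_pos ν a ht
    have := measure_ball_lt_top (μ := ν) (x := a) (r := t)
    positivity
  have hF_top : F ≠ ⊤ := by
    have := measure_ball_pos ν a ht
    have := measure_ball_lt_top (μ := ν) (x := a) (r := t)
    finiteness
  have hκ : κ (ball a t) ≤ K * ENNReal.ofReal t ^ β * (∫⁻ y in ball a t, w y ∂κ) / F := by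
    rw [ENNReal.le_div_iff_mul_le (.inl hF₀) (.inl hF_top)]
    exact h.measure_ball_mul_le ht
  have hpow : ENNReal.ofReal (t ^ (-β - 1)) * ENNReal.ofReal t ^ β = ENNReal.ofReal t⁻¹ := by
    rw [ENNReal.ofReal_rpow_of_pos ht, ← ENNReal.ofReal_mul (by positivity), ← Real.rpow_add ht,
      show -β - 1 + β = -1 by ring, Real.rpow_neg_one]
  calc ENNReal.ofReal (t ^ (-β - 1)) * κ (ball a t)
      ≤ ENNReal.ofReal (t ^ (-β - 1)) *
          (K * ENNReal.ofReal t ^ β * (∫⁻ y in ball a t, w y ∂κ) / F) := by gcongr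
    _ = K * ((∫⁻ y in ball a t, w y ∂κ) * F⁻¹ *
          (ENNReal.ofReal (t ^ (-β - 1)) * ENNReal.ofReal t ^ β)) := by
        rw [div_eq_mul_inv]
        ring
    _ = K * ((∫⁻ y in ball a t, w y ∂κ) * ν (ball a t) ^ (-(1 / q)) * ENNReal.ofReal t⁻¹) := by
        rw [hpow, ENNReal.rpow_neg]

theorem FractionalA1.lintegral_compl_ball_le [SecondCountableTopology X] [OpensMeasurableSpace X]
    [ProperSpace X] [SFinite κ] [IsFiniteMeasureOnCompacts ν] [ν.IsOpenPosMeasure]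
    (h : FractionalA1 β q K ν κ w) (hβ : 0 < β) (hr : 0 < r) (hx : x ∈ ball a r) :
    ∫⁻ y in (ball a (2 * r))ᶜ, (edist x y ^ β)⁻¹ ∂κ ≤
      2 ^ β * ENNReal.ofReal β * K * tailIntegral q κ ν w a (2 * r) := by
  calc ∫⁻ y in (ball a (2 * r))ᶜ, (edist x y ^ β)⁻¹ ∂κ
      ≤ ∫⁻ y in (ball a (2 * r))ᶜ, 2 ^ β * (edist y a ^ β)⁻¹ ∂κ :=
        setLIntegral_mono' measurableSet_ball.compl fun y hy ↦
          edist_rpow_inv_le_of_mem_ball hβ.le hx hy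
    _ ≤ 2 ^ β * (ENNReal.ofReal β * (K * tailIntegral q κ ν w a (2 * r))) := by
        rw [lintegral_const_mul' _ _ (by finiteness)]
        grw [lintegral_compl_ball_edist_rpow_inv_le hβ (by positivity),
          h.lintegral_Ioi_le_tailIntegral (by positivity)]
    _ = 2 ^ β * ENNReal.ofReal β * K * tailIntegral q κ ν w a (2 * r) := by ring

theorem lintegral_ball_le_mul_tailIntegral [ProperSpace X] [IsFiniteMeasureOnCompacts ν]
    [ν.IsOpenPosMeasure] (hq : 0 < q) (hr : 0 < r) :
    ∫⁻ y in ball a r, w y ∂κ ≤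
      2 * ν (ball a (2 * r)) ^ (1 / q) * tailIntegral q κ ν w a r := by
  set F := ν (ball a (2 * r)) ^ (1 / q)
  set M := ∫⁻ y in ball a r, w y ∂κ
  have hpos : 0 < ν (ball a (2 * r)) := measure_ball_pos ν a (by positivity)
  have : ν (ball a (2 * r)) < ⊤ := measure_ball_lt_top
  have hlog : ENNReal.ofReal 2⁻¹ ≤ ∫⁻ _ in Ioc r (2 * r), ENNReal.ofReal (2 * r)⁻¹ := by
    rw [setLIntegral_const, Real.volume_Ioc, ← ENNReal.ofReal_mul (by positivity)]
    apply ENNReal.ofReal_le_ofReal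
    field_simp
    linarith
  have htail : M * F⁻¹ * ENNReal.ofReal 2⁻¹ ≤ tailIntegral q κ ν w a r := by
    calc M * F⁻¹ * ENNReal.ofReal 2⁻¹
        ≤ ∫⁻ _ in Ioc r (2 * r), M * F⁻¹ * ENNReal.ofReal (2 * r)⁻¹ := by
          grw [hlog]
          exact lintegral_const_mul_le _ _
      _ ≤ ∫⁻ t in Ioc r (2 * r),
            (∫⁻ y in ball a t, w y ∂κ) * ν (ball a t) ^ (-(1 / q)) * ENNReal.ofReal t⁻¹ := by
          refine setLIntegral_mono' measurableSet_Ioc fun t ⟨hrt, htr⟩ ↦ ?_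
          have ht : 0 < t := hr.trans hrt
          rw [ENNReal.rpow_neg]
          have hM : M ≤ ∫⁻ y in ball a t, w y ∂κ := lintegral_mono_set (ball_subset_ball hrt.le)
          have hF : ν (ball a t) ^ (1 / q) ≤ F :=
            ENNReal.rpow_le_rpow (measure_mono (ball_subset_ball htr)) (by positivity)
          gcongr
      _ ≤ tailIntegral q κ ν w a r := lintegral_mono_set Ioc_subset_Ioi_self
  calc M = 2 * F * (M * F⁻¹ * ENNReal.ofReal 2⁻¹) := by
        have hF : F * F⁻¹ = 1 := ENNReal.mul_inv_cancel (by positivity) (by finiteness)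
        have htwo : (2 : ℝ≥0∞) * ENNReal.ofReal 2⁻¹ = 1 := by
          rw [← ENNReal.ofReal_ofNat 2, ← ENNReal.ofReal_mul (by simp)]
          simp
        rw [show 2 * F * (M * F⁻¹ * ENNReal.ofReal 2⁻¹) =
          M * (F * F⁻¹) * (2 * ENNReal.ofReal 2⁻¹) by ring, hF, htwo, mul_one, mul_one]
    _ ≤ 2 * F * tailIntegral q κ ν w a r := by gcongr

theorem FractionalA1.weakLpNorm_restrict_ball_rieszPotential_le [SecondCountableTopology X]
    [BorelSpace X] [ProperSpace X] [SFinite κ] [IsFiniteMeasureOnCompacts ν] [ν.IsOpenPosMeasure]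
    (h : FractionalA1 β q K ν κ w) (hβ : 0 < β) (hq : 1 < q) (hr : 0 < r)
    (hν : ν (ball a (4 * r)) ^ (1 / q) ≤ L * ν (ball a r) ^ (1 / q)) :
    weakLpNorm q (ν.restrict (ball a r)) (rieszPotential β κ) ≤
      2 * (ENNReal.ofReal (q / (q - 1)) * (3 ^ β * K) * (2 * L) + 2 ^ β * ENNReal.ofReal β * K) *
        (ν (ball a r) ^ (1 / q) * tailIntegral q κ ν w a r) := by
  have hq₀ : 0 < q := by linarith
  have : Fact (ν (ball a r) < ⊤) := ⟨measure_ball_lt_top⟩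
  have hr₂ : 0 < 2 * r := by positivity
  set G := ν (ball a r) ^ (1 / q)
  set T := tailIntegral q κ ν w a r
  have hT : tailIntegral q κ ν w a (2 * r) ≤ T := tailIntegral_anti (by linarith)
  have hsplit : rieszPotential β κ = fun x ↦ rieszPotential β (κ.restrict (ball a (2 * r))) x +
      ∫⁻ y in (ball a (2 * r))ᶜ, (edist x y ^ β)⁻¹ ∂κ :=
    funext fun x ↦ (lintegral_add_compl _ measurableSet_ball).symm
  have hnear : weakLpNorm q (ν.restrict (ball a r))
        (rieszPotential β (κ.restrict (ball a (2 * r)))) ≤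
      ENNReal.ofReal (q / (q - 1)) * (3 ^ β * K) * (2 * L) * (G * T) := by
    have hrestrict := h.mono (ν' := ν.restrict (ball a r)) (κ' := κ.restrict (ball a (2 * r)))
      hq₀.le Measure.restrict_le_self Measure.restrict_le_self.absolutelyContinuous
    grw [hrestrict.weakLpNorm_rieszPotential_le hβ hq,
      lintegral_ball_le_mul_tailIntegral (ν := ν) hq₀ hr₂, hT, show 2 * (2 * r) = 4 * r by ring, hν]
    exact le_of_eq (by ring)
  have hfar : weakLpNorm q (ν.restrict (ball a r))
        (fun x ↦ ∫⁻ y in (ball a (2 * r))ᶜ, (edist x y ^ β)⁻¹ ∂κ) ≤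
      2 ^ β * ENNReal.ofReal β * K * (G * T) := by
    have hbound : ∀ᵐ x ∂ν.restrict (ball a r),
        ∫⁻ y in (ball a (2 * r))ᶜ, (edist x y ^ β)⁻¹ ∂κ ≤ 2 ^ β * ENNReal.ofReal β * K * T := by
      filter_upwards [ae_restrict_mem measurableSet_ball] with x hx
      grw [h.lintegral_compl_ball_le hβ hr hx, hT]
    refine (weakLpNorm_le_of_ae_le hq₀ hbound).trans_eq ?_
    rw [Measure.restrict_apply_univ]
    ring
  rw [hsplit]
  grw [weakLpNorm_add_le hq.le, hnear, hfar]
  exact le_of_eq (by ring)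

theorem FractionalA1.isFiniteMeasureOnCompacts [OpensMeasurableSpace X] [κ.IsOpenPosMeasure]
    (h : FractionalA1 β q K ν κ w) (hq : 0 < q) (hw : ∀ y, w y ≠ ⊤) :
    IsFiniteMeasureOnCompacts ν := by
  have hball (a : X) : ν (ball a 1) < ⊤ := by
    obtain ⟨y, -, hy⟩ := Measure.exists_mem_of_measure_ne_zero_of_ae
      (measure_ball_pos κ a one_pos).ne'
      ((ae_restrict_iff' measurableSet_ball).2 (h a 1 one_pos))
    rw [← ENNReal.rpow_lt_top_iff_of_pos (one_div_pos.2 hq)]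
    refine hy.trans_lt ?_
    rw [ENNReal.ofReal_one, ENNReal.one_rpow, mul_one]
    exact ENNReal.mul_lt_top ENNReal.coe_lt_top (hw y).lt_top
  have : IsLocallyFiniteMeasure ν := ⟨fun a ↦ ⟨ball a 1, ball_mem_nhds a one_pos, hball a⟩⟩
  infer_instance

theorem FractionalA1.rpow_measure_ball_mul_le [OpensMeasurableSpace X]
    (h : FractionalA1 β q K (κ.withDensity fun x ↦ w x ^ q) κ w) (hβ : 0 ≤ β) (hq : 0 < q)
    (hr : 0 < r) (hrR : r ≤ R) :
    κ.withDensity (fun x ↦ w x ^ q) (ball a R) ^ (1 / q) * κ (ball a r) ^ (1 / q) ≤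
      K * ENNReal.ofReal R ^ β * κ.withDensity (fun x ↦ w x ^ q) (ball a r) ^ (1 / q) := by
  set ν := κ.withDensity fun x ↦ w x ^ q
  have hq' : 0 ≤ 1 / q := by positivity
  have hcoef : ((K : ℝ≥0∞) * ENNReal.ofReal R ^ β) ^ q ≠ ⊤ := by finiteness
  have hmeasure : ν (ball a R) * κ (ball a r) ≤
      (K * ENNReal.ofReal R ^ β) ^ q * ν (ball a r) := by
    have hball : ν (ball a r) = ∫⁻ y in ball a r, w y ^ q ∂κ :=
      withDensity_apply _ measurableSet_ball
    rw [hball, ← lintegral_const_mul' _ _ hcoef, ← setLIntegral_const]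
    refine setLIntegral_mono_ae' measurableSet_ball ?_
    filter_upwards [h a R (hr.trans_le hrR)] with y hy hyr
    rw [← ENNReal.mul_rpow_of_nonneg _ _ hq.le, ← ENNReal.rpow_inv_le_iff hq, ← one_div]
    exact hy (ball_subset_ball hrR hyr)
  calc ν (ball a R) ^ (1 / q) * κ (ball a r) ^ (1 / q)
      ≤ ((K * ENNReal.ofReal R ^ β) ^ q * ν (ball a r)) ^ (1 / q) := by
        rw [← ENNReal.mul_rpow_of_nonneg _ _ hq']
        gcongr
    _ = K * ENNReal.ofReal R ^ β * ν (ball a r) ^ (1 / q) := by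
        rw [ENNReal.mul_rpow_of_nonneg _ _ hq', one_div, ENNReal.rpow_rpow_inv hq.ne']

end RieszPotential

section Euclidean

open scoped NNReal

/-- The measure `w dx`, whose value on a set `E` is `wSet w E`; negative values of `w` count
as zero. -/
noncomputable def weightMeasure {n : ℕ} (w : EuclideanSpace ℝ (Fin n) → ℝ) :
    Measure (EuclideanSpace ℝ (Fin n)) :=
  volume.withDensity fun x ↦ ENNReal.ofReal (w x)

variable {n : ℕ} {q : ℝ} {w f : EuclideanSpace ℝ (Fin n) → ℝ}
  {ψ : EuclideanSpace ℝ (Fin n) → ℝ → ℝ} {g : EuclideanSpace ℝ (Fin n) → ℝ≥0∞}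
  {Ω : Set (EuclideanSpace ℝ (Fin n))}

theorem weightMeasure_apply : weightMeasure w Ω = wSet w Ω :=
  withDensity_apply' _ Ω

theorem weightMeasure_rpow (hw : ∀ x, 0 ≤ w x) (hq : 0 ≤ q) :
    weightMeasure (fun x ↦ w x ^ q) = volume.withDensity fun x ↦ ENNReal.ofReal (w x) ^ q := by
  simp only [weightMeasure, ENNReal.ofReal_rpow_of_nonneg (hw _) hq]

theorem isOpenPosMeasure_weightMeasure (hw : Measurable w) (hpos : ∀ᵐ x, 0 < w x) :
    (weightMeasure w).IsOpenPosMeasure := by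
  refine (withDensity_absolutelyContinuous' (by fun_prop) ?_).isOpenPosMeasure
  filter_upwards [hpos] with x hx
  simpa using hx

theorem wWeakLpE_le_weakLpNorm (hΩ : MeasurableSet Ω) :
    wWeakLpE q w g Ω ≤ weakLpNorm q ((weightMeasure w).restrict Ω) g := by
  refine iSup_le fun γ ↦ ?_
  have hset : wSet w {x | x ∈ Ω ∧ ENNReal.ofReal γ.1 < g x} =
      (weightMeasure w).restrict Ω {x | ENNReal.ofReal γ.1 < g x} := by
    rw [Measure.restrict_apply' hΩ, weightMeasure_apply, inter_comm]
    rfl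
  rw [hset]
  exact mul_measure_lt_rpow_le_weakLpNorm γ.1.toNNReal

theorem wLp_one_eq_lintegral (hf : Measurable f) (hw : Measurable w) (hΩ : MeasurableSet Ω) :
    wLp 1 w f Ω = ∫⁻ x in Ω, ENNReal.ofReal (w x) ∂weightMeasure fun x ↦ |f x| := by
  simp only [wLp, ENNReal.rpow_one, div_one]
  rw [weightMeasure, setLIntegral_withDensity_eq_setLIntegral_mul _ (by fun_prop) (by fun_prop) hΩ]
  rfl

theorem fracIntE_eq_rieszPotential {α : ℝ} (hα : α ≤ n) (hf : Measurable f) :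
    fracIntE α f = rieszPotential (n - α) (weightMeasure fun x ↦ |f x|) := by
  ext x
  rw [fracIntE, rieszPotential, weightMeasure,
    lintegral_withDensity_eq_lintegral_mul _ (by fun_prop) (by fun_prop)]
  refine lintegral_congr fun y ↦ ?_
  rw [Pi.mul_apply, div_eq_mul_inv, edist_dist,
    ENNReal.ofReal_rpow_of_nonneg dist_nonneg (sub_nonneg.2 hα)]

theorem volume_ball_rpow {s : ℝ} (hs : 0 ≤ s) (a : EuclideanSpace ℝ (Fin n)) {r : ℝ} (hr : 0 < r) :
    volume (ball a r) ^ s =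
      ENNReal.ofReal r ^ (n * s) * volume (ball (0 : EuclideanSpace ℝ (Fin n)) 1) ^ s := by
  rw [Measure.addHaar_ball_of_pos _ _ hr, ENNReal.mul_rpow_of_nonneg _ _ hs,
    finrank_euclideanSpace_fin, ENNReal.ofReal_pow hr.le, ENNReal.rpow_mul, ENNReal.rpow_natCast]

theorem MuckA1q.exists_fractionalA1 (h : MuckA1q q w) (hw : ∀ᵐ x, 0 < w x) (hq : 0 < q) :
    ∃ K : ℝ≥0, FractionalA1 (n / q) q K (weightMeasure fun x ↦ w x ^ q) volume
      fun x ↦ ENNReal.ofReal (w x) := by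
  obtain ⟨C, -, hC⟩ := h
  have hq' : 0 ≤ 1 / q := by positivity
  set v := volume (ball (0 : EuclideanSpace ℝ (Fin n)) 1) ^ (1 / q)
  have hv : v ≠ ⊤ := ENNReal.rpow_ne_top_of_nonneg hq' measure_ball_lt_top.ne
  refine ⟨C.toNNReal * v.toNNReal, fun a t ht ↦ ?_⟩
  have hess := (ae_restrict_iff' measurableSet_ball).1
    (ENNReal.ae_le_essSup (μ := volume.restrict (ball a t)) fun x ↦ ENNReal.ofReal (w x)⁻¹)
  filter_upwards [hess, hw] with y hy hwy hyt
  set A := (volume (ball a t))⁻¹ * ∫⁻ x in ball a t, ENNReal.ofReal (w x ^ q)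
  have hA : A ^ (1 / q) ≤ ENNReal.ofReal C * ENNReal.ofReal (w y) := by
    rw [← ENNReal.div_le_iff (by simpa using hwy) ENNReal.ofReal_ne_top, div_eq_mul_inv,
      ← ENNReal.ofReal_inv_of_pos hwy]
    grw [hy hyt]
    exact hC a t ht
  have hmeasure : weightMeasure (fun x ↦ w x ^ q) (ball a t) = volume (ball a t) * A := by
    rw [weightMeasure_apply, ENNReal.mul_inv_cancel_left (measure_ball_pos _ _ ht).ne'
      measure_ball_lt_top.ne, wSet]
  calc weightMeasure (fun x ↦ w x ^ q) (ball a t) ^ (1 / q)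
      = volume (ball a t) ^ (1 / q) * A ^ (1 / q) := by
        rw [hmeasure, ENNReal.mul_rpow_of_nonneg _ _ hq']
    _ ≤ ENNReal.ofReal t ^ (n / q) * v * (ENNReal.ofReal C * ENNReal.ofReal (w y)) := by
        grw [hA, volume_ball_rpow hq' a ht, mul_one_div]
    _ = _ := by
        rw [ENNReal.coe_mul, ENNReal.coe_toNNReal hv, ENNReal.ofNNReal_toNNReal]
        ring

theorem FractionalA1.exists_doubling {K : ℝ≥0}
    (h : FractionalA1 (n / q) q K (weightMeasure fun x ↦ w x ^ q) volume
      fun x ↦ ENNReal.ofReal (w x)) (hw : ∀ x, 0 ≤ w x) (hq : 0 < q) :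
    ∃ L : ℝ≥0, ∀ (a : EuclideanSpace ℝ (Fin n)) (r : ℝ), 0 < r →
      weightMeasure (fun x ↦ w x ^ q) (ball a (4 * r)) ^ (1 / q) ≤
        L * weightMeasure (fun x ↦ w x ^ q) (ball a r) ^ (1 / q) := by
  set v := volume (ball (0 : EuclideanSpace ℝ (Fin n)) 1) ^ (1 / q) with hv
  have hpos : 0 < volume (ball (0 : EuclideanSpace ℝ (Fin n)) 1) := measure_ball_pos _ _ one_pos
  have hlt_top : volume (ball (0 : EuclideanSpace ℝ (Fin n)) 1) < ⊤ := measure_ball_lt_top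
  have hv₀ : v ≠ 0 := by positivity
  have hv_top : v ≠ ⊤ := by finiteness
  have hL : (K : ℝ≥0∞) * 4 ^ (n / q) / v ≠ ⊤ := by finiteness
  refine ⟨(K * 4 ^ (n / q) / v).toNNReal, fun a r hr ↦ ?_⟩
  rw [weightMeasure_rpow hw hq.le] at h ⊢
  have hcompare := h.rpow_measure_ball_mul_le (a := a) (by positivity) hq hr
    (by linarith : r ≤ 4 * r)
  set ν := volume.withDensity fun x ↦ ENNReal.ofReal (w x) ^ q
  set ρ := ENNReal.ofReal r ^ (n / q) with hρ
  have hr₀ : 0 < ENNReal.ofReal r := by simpa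
  have hρ₀ : ρ ≠ 0 := by positivity
  have hρ_top : ρ ≠ ⊤ := by finiteness
  rw [volume_ball_rpow (by positivity) a hr, mul_one_div, ← hρ, ← hv,
    ENNReal.ofReal_mul (by simp), ENNReal.mul_rpow_of_nonneg _ _ (by positivity), ← hρ,
    ENNReal.ofReal_ofNat] at hcompare
  rw [ENNReal.coe_toNNReal hL, ← ENNReal.mul_le_mul_iff_left (mul_ne_zero hρ₀ hv₀)
    (ENNReal.mul_ne_top hρ_top hv_top)]
  refine hcompare.trans_eq ?_
  calc K * (4 ^ (n / q) * ρ) * ν (ball a r) ^ (1 / q)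
      = K * 4 ^ (n / q) * (v / v) * ν (ball a r) ^ (1 / q) * ρ := by
        rw [ENNReal.div_self hv₀ hv_top]
        ring
    _ = K * 4 ^ (n / q) / v * ν (ball a r) ^ (1 / q) * (ρ * v) := by
        simp only [div_eq_mul_inv]
        ring

theorem one_lt_of_one_div_eq_one_sub_div {α d : ℝ} (hα : 0 < α) (hαd : α < d)
    (hq : 1 / q = 1 - α / d) : 1 < q := by
  have hd : 0 < d := hα.trans hαd
  have hα_div : 0 < α / d := by positivity
  have hα_div_lt : α / d < 1 := (div_lt_one hd).2 hαd
  rw [← inv_inv q, ← one_div q, hq, one_lt_inv_iff₀]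
  constructor <;> linarith

theorem MuckA1q.exists_wWeakLpE_fracIntE_le {α : ℝ} (h : MuckA1q q w) (hw : IsWeight w)
    (hα : 0 < α) (hαn : α < n) (hq : 1 / q = 1 - α / n) :
    ∃ c : ℝ≥0, ∀ f : EuclideanSpace ℝ (Fin n) → ℝ, Measurable f →
      ∀ (a : EuclideanSpace ℝ (Fin n)) (r : ℝ), 0 < r →
        wWeakLpE q (fun x ↦ w x ^ q) (fracIntE α f) (ball a r) ≤
          c * (wSet (fun x ↦ w x ^ q) (ball a r) ^ (1 / q) *
            ∫⁻ t in Ioi r, wLp 1 w f (ball a t) *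
              wSet (fun x ↦ w x ^ q) (ball a t) ^ (-(1 / q)) * ENNReal.ofReal t⁻¹) := by
  have hq₁ : 1 < q := one_lt_of_one_div_eq_one_sub_div hα hαn hq
  have hq₀ : 0 < q := by linarith
  have hn : (0 : ℝ) < n := hα.trans hαn
  have hβ : (n / q : ℝ) = n - α := by
    rw [div_eq_mul_one_div, hq]
    field_simp
  obtain ⟨hw_meas, hw_nonneg, -, hw_pos⟩ := hw
  obtain ⟨K, hK⟩ := h.exists_fractionalA1 hw_pos hq₀
  obtain ⟨L, hL⟩ := hK.exists_doubling hw_nonneg hq₀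
  have := hK.isFiniteMeasureOnCompacts hq₀ fun _ ↦ ENNReal.ofReal_ne_top
  have : (weightMeasure fun x ↦ w x ^ q).IsOpenPosMeasure :=
    isOpenPosMeasure_weightMeasure (by fun_prop) (hw_pos.mono fun x hx ↦ by positivity)
  set c : ℝ≥0∞ := 2 * (ENNReal.ofReal (q / (q - 1)) * (3 ^ (n / q) * K) * (2 * L) +
    2 ^ (n / q) * ENNReal.ofReal (n / q) * K)
  have hc_top : c ≠ ⊤ := by finiteness
  refine ⟨c.toNNReal, fun f hf a r hr ↦ ?_⟩
  have : SFinite (weightMeasure fun x ↦ |f x|) := by unfold weightMeasure; infer_instance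
  have hκ : FractionalA1 (n / q) q K (weightMeasure fun x ↦ w x ^ q) (weightMeasure fun x ↦ |f x|)
      fun x ↦ ENNReal.ofReal (w x) :=
    hK.mono hq₀.le le_rfl (withDensity_absolutelyContinuous _ _)
  refine (wWeakLpE_le_weakLpNorm measurableSet_ball).trans ?_
  rw [fracIntE_eq_rieszPotential hαn.le hf, ← hβ, ENNReal.coe_toNNReal hc_top]
  simp only [wLp_one_eq_lintegral hf hw_meas measurableSet_ball, ← weightMeasure_apply]
  exact hκ.weakLpNorm_restrict_ball_rieszPotential_le (by positivity) hq₁ hr (hL a r hr)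

theorem IsWeight.wSet_ball_pos (hw : IsWeight w) (a : EuclideanSpace ℝ (Fin n)) {r : ℝ}
    (hr : 0 < r) : 0 < wSet w (ball a r) := by
  have := isOpenPosMeasure_weightMeasure hw.1 hw.2.2.2
  rw [← weightMeasure_apply]
  exact measure_ball_pos _ a hr

theorem IsWeight.wSet_ball_lt_top (hw : IsWeight w) (a : EuclideanSpace ℝ (Fin n)) (r : ℝ) :
    wSet w (ball a r) < ⊤ := by
  have hint : IntegrableOn w (ball a r) :=
    (hw.2.2.1.integrableOn_isCompact (isCompact_closedBall a r)).mono_set ball_subset_closedBall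
  exact hint.lintegral_lt_top

theorem IsWeight.wLp_le_morreyNorm_mul {p : ℝ} (hw : IsWeight w) (a : EuclideanSpace ℝ (Fin n))
    {r : ℝ} (hr : 0 < r) (hψ : 0 < ψ a r) :
    wLp p w f (ball a r) ≤
      morreyNorm p w ψ f * (ENNReal.ofReal (ψ a r) * wSet w (ball a r) ^ (1 / p)) := by
  have hW_pos := hw.wSet_ball_pos a hr
  have hW_top := hw.wSet_ball_lt_top a r
  have hψ' : 0 < ENNReal.ofReal (ψ a r) := by simpa
  set W := ENNReal.ofReal (ψ a r) * wSet w (ball a r) ^ (1 / p) with hW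
  have hWp_pos : 0 < wSet w (ball a r) ^ (1 / p) := by positivity
  have hWp_top : wSet w (ball a r) ^ (1 / p) ≠ ⊤ := by finiteness
  have hterm : W⁻¹ * wLp p w f (ball a r) ≤ morreyNorm p w ψ f := by
    rw [hW, ENNReal.mul_inv (.inl hψ'.ne') (.inr hWp_pos.ne'), ← ENNReal.rpow_neg]
    exact le_iSup₂_of_le a ⟨r, hr⟩ le_rfl
  rwa [mul_comm, ← div_eq_mul_inv, ENNReal.div_le_iff (by positivity) (by finiteness)] at hterm

theorem morreyWeakNormE_le {p : ℝ} {c : ℝ≥0∞}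
    (hg : ∀ a r, 0 < r → wWeakLpE p w g (ball a r) ≤
      c * (ENNReal.ofReal (ψ a r) * wSet w (ball a r) ^ (1 / p))) :
    morreyWeakNormE p w ψ g ≤ c := by
  refine iSup₂_le fun a ⟨r, hr⟩ ↦ ?_
  dsimp only
  grw [hg a r hr]
  set W := wSet w (ball a r) ^ (1 / p)
  calc (ENNReal.ofReal (ψ a r))⁻¹ * wSet w (ball a r) ^ (-(1 / p)) *
        (c * (ENNReal.ofReal (ψ a r) * W))
      = c * ((ENNReal.ofReal (ψ a r))⁻¹ * ENNReal.ofReal (ψ a r)) * (W⁻¹ * W) := by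
        rw [ENNReal.rpow_neg]
        ring
    _ ≤ c * 1 * 1 := by
        gcongr <;> exact ENNReal.inv_mul_le_one _
    _ = c := by rw [mul_one, mul_one]

end Euclidean

/-- Let `0 < α < n`, `1/q = 1 − α/n`, `w ∈ A_{1,q}`, and let `ψ₁, ψ₂` be
positive functions on `ℝⁿ × (0,∞)` with
`∫_r^∞ (w(B(a,t))/w^q(B(a,t))^{1/q})·ψ₁(a,t) dt/t ≤ C·ψ₂(a,r)` for all `(a,r)`.
Then `I_α` is bounded from `M^{1,w}_{ψ₁}` to `WM^{q,w^q}_{ψ₂}`. -/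
theorem statement15 {n : ℕ} (α q : ℝ) (hα : 0 < α) (hαn : α < n)
    (hq : 1 / q = 1 - α / n)
    (w : EuclideanSpace ℝ (Fin n) → ℝ) (hw : IsWeight w) (hA1q : MuckA1q q w)
    (ψ₁ ψ₂ : EuclideanSpace ℝ (Fin n) → ℝ → ℝ)
    (hψ₁ : ∀ a r, 0 < r → 0 < ψ₁ a r) (hψ₂ : ∀ a r, 0 < r → 0 < ψ₂ a r)
    (C : ℝ) (hC : 0 < C)
    (hcond : ∀ (a : EuclideanSpace ℝ (Fin n)) (r : ℝ), 0 < r →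
      (∫⁻ t in Set.Ioi r,
        wSet w (ball a t) * wSet (fun x => w x ^ q) (ball a t) ^ (-(1 / q)) *
          ENNReal.ofReal (ψ₁ a t) * ENNReal.ofReal t⁻¹) ≤
        ENNReal.ofReal (C * ψ₂ a r)) :
    ∃ C' : ℝ, 0 < C' ∧ ∀ f : EuclideanSpace ℝ (Fin n) → ℝ,
      MemLocWLp 1 w f → morreyNorm 1 w ψ₁ f < ⊤ →
      morreyWeakNormE q (fun x => w x ^ q) ψ₂ (fracIntE α f) ≤
        ENNReal.ofReal C' * morreyNorm 1 w ψ₁ f := by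
  obtain ⟨c, hc⟩ := hA1q.exists_wWeakLpE_fracIntE_le hw hα hαn hq
  refine ⟨(c + 1) * C, by positivity, fun f hf hN ↦ morreyWeakNormE_le fun a r hr ↦ ?_⟩
  set N := morreyNorm 1 w ψ₁ f
  set G := wSet (fun x ↦ w x ^ q) (ball a r) ^ (1 / q)
  have htail : ∫⁻ t in Ioi r, wLp 1 w f (ball a t) *
        wSet (fun x ↦ w x ^ q) (ball a t) ^ (-(1 / q)) * ENNReal.ofReal t⁻¹ ≤
      N * ENNReal.ofReal (C * ψ₂ a r) := by
    grw [← hcond a r hr]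
    rw [← lintegral_const_mul' _ _ hN.ne]
    refine setLIntegral_mono' measurableSet_Ioi fun t ht ↦ ?_
    have ht : 0 < t := hr.trans ht
    grw [hw.wLp_le_morreyNorm_mul a ht (hψ₁ a t ht), div_one, ENNReal.rpow_one]
    exact le_of_eq (by ring)
  calc wWeakLpE q (fun x ↦ w x ^ q) (fracIntE α f) (ball a r)
      ≤ c * (G * (N * ENNReal.ofReal (C * ψ₂ a r))) := (hc f hf.1 a r hr).trans (by gcongr)
    _ ≤ (c + 1) * (G * (N * ENNReal.ofReal (C * ψ₂ a r))) := by
        gcongr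
        exact le_self_add
    _ = ENNReal.ofReal ((c + 1) * C) * N * (ENNReal.ofReal (ψ₂ a r) * G) := by
        rw [ENNReal.ofReal_mul hC.le, ENNReal.ofReal_mul (by positivity),
          ENNReal.ofReal_add (by simp) (by simp), ENNReal.ofReal_coe_nnreal, ENNReal.ofReal_one]
        ring
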